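/- arXiv:2309.14748 — 2 statements merged into one kernel-verified Lean document; each statement's English description precedes it below -/
import Mathlib

section
/- Let b ≥ 2 be an integer and p, q primes with p > b^q. Suppose k ∈ {0,1,...,q-1} and p ≡ r (mod q(q-1)) for some r coprime to q(q-1) with b^r ≡ k·r + b (mod q). Then |frac(b^{pq}/(pq)) − k/q| < 1/q, where frac(b^{pq}/(pq)) = (b^{pq} mod pq)/(pq). -/
theorem stmt_0 (b p q : ℕ) (hb : 2 ≤ b) (hp : p.Prime) (hq : q.Prime)
    (hpb : b ^ q < p) (k r : ℕ) (hk : k < q)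
    (hr : r.Coprime (q * (q - 1)))
    (hpr : p ≡ r [MOD q * (q - 1)])
    (hbr : b ^ r ≡ k * r + b [MOD q]) :
    |((b ^ (p * q) % (p * q) : ℕ) : ℝ) / ((p * q : ℕ) : ℝ) - (k : ℝ) / q| < 1 / q := by
  haveI := Fact.mk hp
  haveI := Fact.mk hq
  have hq2 := hq.two_le
  have hqp : q < p := lt_trans (Nat.lt_pow_self (by omega)) hpb
  have hr0 : r ≠ 0 := by
    rintro rfl
    rw [Nat.coprime_zero_left] at hr
    have := Nat.eq_one_of_mul_eq_one_right hr
    omega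
  have h1 : b ^ (p * q) ≡ k * p + b ^ q [MOD p] := by
    rw [← ZMod.natCast_eq_natCast_iff]
    push_cast
    rw [pow_mul, ZMod.pow_card]
    simp
  have hpow : (b : ZMod q) ^ p = (b : ZMod q) ^ r := by
    by_cases h0 : (b : ZMod q) = 0
    · rw [h0, zero_pow hp.ne_zero, zero_pow hr0]
    · exact pow_eq_pow_of_modEq (hpr.of_mul_left q) (ZMod.pow_card_sub_one_eq_one h0)
  have hpr' : (p : ZMod q) = r := (ZMod.natCast_eq_natCast_iff _ _ _).2 (hpr.of_mul_right _)
  have h2 : b ^ (p * q) ≡ k * p + b ^ q [MOD q] := by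
    rw [← ZMod.natCast_eq_natCast_iff] at hbr ⊢
    push_cast at hbr ⊢
    rw [pow_mul, ZMod.pow_card, ZMod.pow_card, hpow, hbr, hpr']
  have hcop : p.Coprime q := (Nat.coprime_primes hp hq).2 (by omega)
  have h3 : b ^ (p * q) ≡ k * p + b ^ q [MOD p * q] :=
    (Nat.modEq_and_modEq_iff_modEq_mul hcop).1 ⟨h1, h2⟩
  have hlt : k * p + b ^ q < p * q := by nlinarith
  have h4 : b ^ (p * q) % (p * q) = k * p + b ^ q := by
    rw [h3, Nat.mod_eq_of_lt hlt]
  rw [h4]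
  have hp0 : (0 : ℝ) < p := by exact_mod_cast hp.pos
  have hq0 : (0 : ℝ) < q := by exact_mod_cast hq.pos
  have hbp : (b : ℝ) ^ q < p := by exact_mod_cast hpb
  have h5 : ((k * p + b ^ q : ℕ) : ℝ) / ((p * q : ℕ) : ℝ) - (k : ℝ) / q
      = (b : ℝ) ^ q / (p * q) := by
    push_cast
    field_simp
    ring
  rw [h5, abs_of_nonneg (by positivity), div_lt_div_iff₀ (by positivity) hq0]
  nlinarith
end

section
/- Let b ≥ 2 and A = {pq : p, q primes, p > b^q}, A_N = A ∩ [1,N]. Then |A_N| ~ N·log log log N / log N, in the sense that there are absolute positive constants c₁, c₂ and N₀ such that c₁·N·log log log N/log N ≤ |A_N| ≤ c₂·N·log log log N/log N for all N ≥ N₀. -/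
open Finset

noncomputable def Srec (n : ℕ) : ℝ := ∑ q ∈ (Finset.range (n+1)).filter Nat.Prime, (1:ℝ) / q

lemma pc_succ (n : ℕ) : Nat.primeCounting (n+1) = Nat.primeCounting n + if (n+1).Prime then 1 else 0 := by
  unfold Nat.primeCounting Nat.primeCounting'
  rw [Nat.count_succ]

lemma pc_card (n : ℕ) : ((Finset.range (n+1)).filter Nat.Prime).card = Nat.primeCounting n := by
  unfold Nat.primeCounting Nat.primeCounting'
  rw [Nat.count_eq_card_filter_range]

lemma Srec_succ (n : ℕ) : Srec (n+1) = Srec n + if (n+1).Prime then (1:ℝ)/((n:ℝ)+1) else 0 := by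
  unfold Srec
  rw [Finset.range_add_one (n := n+1), Finset.filter_insert]
  split_ifs
  · rw [Finset.sum_insert (by simp)]; push_cast; ring
  · simp

noncomputable def Trec (n : ℕ) : ℝ := ∑ m ∈ Finset.range n, (Nat.primeCounting (m+1) : ℝ) / (((m:ℝ)+1) * (m+2))

lemma Srec_eq (n : ℕ) : Srec n = (Nat.primeCounting n : ℝ) / (n+1) + Trec n := by
  induction n with
  | zero => simp [Srec, Trec, Finset.sum_filter]
  | succ n ih =>
    rw [Srec_succ, ih]
    unfold Trec
    rw [Finset.sum_range_succ, pc_succ]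
    split_ifs
    · push_cast; field_simp; ring
    · push_cast; field_simp; ring

lemma loglog_up {x : ℝ} (hx : 2 ≤ x) : Real.log (Real.log (x+1)) - Real.log (Real.log x) ≤ 1 / (x * Real.log x) := by
  have h1 : 0 < Real.log x := Real.log_pos (by linarith)
  have h2 : 0 < Real.log (x+1) := Real.log_pos (by linarith)
  rw [← Real.log_div h2.ne' h1.ne']
  have h3 := Real.log_le_sub_one_of_pos (div_pos h2 h1)
  have h4 : Real.log (x+1) - Real.log x ≤ 1 / x := by
    rw [← Real.log_div (by linarith) (by linarith)]
    have := Real.log_le_sub_one_of_pos (show 0 < (x+1)/x by positivity)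
    have e : (x+1)/x - 1 = 1/x := by field_simp; ring
    linarith
  calc _ ≤ _ := h3
    _ = (Real.log (x+1) - Real.log x) / Real.log x := by field_simp
    _ ≤ (1/x) / Real.log x := by gcongr
    _ = _ := by field_simp

lemma loglog_low {x : ℝ} (hx : 2 ≤ x) : 1 / ((x+1) * Real.log (x+1)) ≤ Real.log (Real.log (x+1)) - Real.log (Real.log x) := by
  have h1 : 0 < Real.log x := Real.log_pos (by linarith)
  have h2 : 0 < Real.log (x+1) := Real.log_pos (by linarith)
  have h3 := Real.log_le_sub_one_of_pos (div_pos h1 h2)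
  rw [Real.log_div h1.ne' h2.ne'] at h3
  have h4 : 1 / (x+1) ≤ Real.log (x+1) - Real.log x := by
    have := Real.log_le_sub_one_of_pos (show 0 < x/(x+1) by positivity)
    rw [Real.log_div (by linarith) (by linarith)] at this
    have e : x/(x+1) - 1 = -(1/(x+1)) := by field_simp; ring
    linarith
  calc _ = (1/(x+1)) / Real.log (x+1) := by field_simp
    _ ≤ (Real.log (x+1) - Real.log x) / Real.log (x+1) := by gcongr
    _ = 1 - Real.log x / Real.log (x+1) := by field_simp
    _ ≤ _ := by linarith

lemma pi_upper {x : ℝ} (hx : 1 < x) :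
    (Nat.primeCounting ⌊x⌋₊ : ℝ) ≤ 2 * (Real.log 4 + 1) * x / Real.log x := by
  have h := Chebyshev.pi_le_log4_mul_div hx
  have hl : 0 < Real.log x := Real.log_pos hx
  have e : Real.log √x = Real.log x / 2 := Real.log_sqrt (by linarith)
  have h5 := Real.log_le_sub_one_of_pos (show 0 < √x by positivity)
  rw [e] at h h5
  have h6 : √x ≤ x / (Real.log x / 2) := by
    rw [le_div_iff₀ (by positivity)]
    nlinarith [Real.mul_self_sqrt (show 0 ≤ x by linarith), Real.sqrt_nonneg x]
  calc _ ≤ _ := h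
    _ ≤ Real.log 4 * x / (Real.log x / 2) + x / (Real.log x / 2) := by linarith
    _ = _ := by field_simp

lemma sq_le_three (n : ℕ) (hn : 2 ≤ n) : (n+1)^2 ≤ 3^n := by
  induction n, hn using Nat.le_induction with
  | base => norm_num
  | succ n hn ih => rw [pow_succ 3]; nlinarith

lemma pi_lower : ∃ c : ℝ, 0 < c ∧ ∀ n : ℕ, 2 ≤ n → c * n / Real.log n ≤ Nat.primeCounting n := by
  refine ⟨Real.log 2 - Real.log 3 / 2, ?_, fun n hn => ?_⟩
  · have : Real.log 3 < Real.log (2^2) := Real.log_lt_log (by norm_num) (by norm_num)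
    rw [Real.log_pow] at this
    push_cast at this; linarith
  · refine le_trans ?_ (Chebyshev.pi_ge n)
    have h1 : 0 < Real.log n := Real.log_pos (by exact_mod_cast hn)
    gcongr
    have h2 : Real.log (((n:ℝ)+1)^2) ≤ Real.log (3^n) := by
      apply Real.log_le_log (by positivity)
      exact_mod_cast sq_le_three n hn
    rw [Real.log_pow, Real.log_pow] at h2
    push_cast at h2
    linarith

lemma T_lower (c : ℝ) (hc0 : 0 < c) (hc : ∀ n : ℕ, 2 ≤ n → c * n / Real.log n ≤ Nat.primeCounting n) (n : ℕ) (hn : 1 ≤ n) :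
    c / 2 * (Real.log (Real.log ((n:ℝ)+1)) - Real.log (Real.log 2)) ≤ Trec n := by
  induction n, hn using Nat.le_induction with
  | base => simp [Trec]; norm_num
  | succ n hn ih =>
    have h := hc (n+1) (by omega)
    have hx : (2:ℝ) ≤ (n:ℝ)+1 := by
      have : (1:ℝ) ≤ n := by exact_mod_cast hn
      linarith
    have h2 := loglog_up hx
    have e : Trec (n+1) = Trec n + (Nat.primeCounting (n+1) : ℝ) / (((n:ℝ)+1) * (n+2)) := by
      unfold Trec; rw [Finset.sum_range_succ]
    rw [e]
    have hl : 0 < Real.log ((n:ℝ)+1) := Real.log_pos (by linarith)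
    have h3 : c / 2 * (1 / (((n:ℝ)+1) * Real.log ((n:ℝ)+1))) ≤ (Nat.primeCounting (n+1) : ℝ) / (((n:ℝ)+1) * (n+2)) := by
      push_cast at h
      calc _ ≤ (c * ((n:ℝ)+1) / Real.log ((n:ℝ)+1)) / (((n:ℝ)+1) * (n+2)) := by
            rw [div_mul_div_comm, div_div, div_le_div_iff₀ (by positivity) (by positivity)]
            have : 0 ≤ c * ((n:ℝ)+1) * Real.log ((n:ℝ)+1) := by positivity
            nlinarith
        _ ≤ _ := by gcongr
    have h4 := mul_le_mul_of_nonneg_left h2 (show 0 ≤ c/2 by positivity)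
    push_cast
    nlinarith

lemma T_upper (C : ℝ) (hC0 : 0 < C) (hC : ∀ n : ℕ, 2 ≤ n → (Nat.primeCounting n : ℝ) ≤ C * n / Real.log n) (n : ℕ) (hn : 1 ≤ n) :
    Trec n ≤ 2 * C * (Real.log (Real.log ((n:ℝ)+1)) - Real.log (Real.log 2)) := by
  induction n, hn using Nat.le_induction with
  | base => simp [Trec]; norm_num
  | succ n hn ih =>
    have h := hC (n+1) (by omega)
    have hx : (2:ℝ) ≤ (n:ℝ)+1 := by
      have : (1:ℝ) ≤ n := by exact_mod_cast hn
      linarith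
    have h2 := loglog_low hx
    have e : Trec (n+1) = Trec n + (Nat.primeCounting (n+1) : ℝ) / (((n:ℝ)+1) * (n+2)) := by
      unfold Trec; rw [Finset.sum_range_succ]
    rw [e]
    have hl : 0 < Real.log ((n:ℝ)+1) := Real.log_pos (by linarith)
    have hl2 : 0 < Real.log ((n:ℝ)+1+1) := Real.log_pos (by linarith)
    have hll : Real.log ((n:ℝ)+1+1) ≤ 2 * Real.log ((n:ℝ)+1) := by
      have : Real.log ((n:ℝ)+1+1) ≤ Real.log (((n:ℝ)+1)^2) := by
        apply Real.log_le_log (by positivity); nlinarith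
      rw [Real.log_pow] at this; exact_mod_cast this
    have h3 : (Nat.primeCounting (n+1) : ℝ) / (((n:ℝ)+1) * (n+2)) ≤ 2 * C * (1 / (((n:ℝ)+1+1) * Real.log ((n:ℝ)+1+1))) := by
      push_cast at h
      calc _ ≤ (C * ((n:ℝ)+1) / Real.log ((n:ℝ)+1)) / (((n:ℝ)+1) * (n+2)) := by gcongr
        _ = C / ((n+2) * Real.log ((n:ℝ)+1)) := by field_simp
        _ ≤ _ := by
            rw [mul_one_div, div_le_div_iff₀ (by positivity) (by positivity)]
            have : 0 ≤ C * ((n:ℝ)+2)  := by positivity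
            nlinarith
    have h4 := mul_le_mul_of_nonneg_left h2 (show 0 ≤ 2 * C by positivity)
    push_cast
    nlinarith

lemma S_lower : ∃ c : ℝ, 0 < c ∧ ∀ n : ℕ, 1 ≤ n → c * Real.log (Real.log ((n:ℝ)+1)) ≤ Srec n := by
  obtain ⟨c, hc0, hc⟩ := pi_lower
  refine ⟨c/2, by positivity, fun n hn => ?_⟩
  have h := T_lower c hc0 hc n hn
  have h2 : Real.log (Real.log 2) ≤ 0 :=
    Real.log_nonpos (Real.log_nonneg (by norm_num)) (by linarith [Real.log_two_lt_d9])
  rw [Srec_eq]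
  have h3 : (0:ℝ) ≤ (Nat.primeCounting n : ℝ) / (n+1) := by positivity
  nlinarith

lemma pc_le (n : ℕ) : Nat.primeCounting n ≤ n := by
  induction n with
  | zero => simp
  | succ n ih => rw [pc_succ]; split_ifs <;> omega

lemma S_upper : ∃ C K : ℝ, 0 < C ∧ 0 < K ∧
    ∀ n : ℕ, 1 ≤ n → Srec n ≤ C * Real.log (Real.log ((n:ℝ)+1)) + K := by
  have hC0 : 0 < 2 * (Real.log 4 + 1) := by
    have : 0 < Real.log 4 := Real.log_pos (by norm_num)
    positivity
  have h2 : Real.log (Real.log 2) ≤ 0 :=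
    Real.log_nonpos (Real.log_nonneg (by norm_num)) (by linarith [Real.log_two_lt_d9])
  refine ⟨2 * (2 * (Real.log 4 + 1)), 1 + 2 * (2 * (Real.log 4 + 1)) * (-Real.log (Real.log 2)),
    by positivity, ?_, fun n hn => ?_⟩
  · have : 0 ≤ -Real.log (Real.log 2) := by linarith
    positivity
  have h := T_upper _ hC0 (fun n hn => by
    have := pi_upper (x := n) (by exact_mod_cast hn)
    rwa [Nat.floor_natCast] at this) n hn
  rw [Srec_eq]
  have h3 : (Nat.primeCounting n : ℝ) / (n+1) ≤ 1 := by
    rw [div_le_one (by positivity)]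
    have : (Nat.primeCounting n : ℝ) ≤ n := by exact_mod_cast pc_le n
    linarith
  linarith

def Aset (b N : ℕ) : Set ℕ := {n : ℕ | 1 ≤ n ∧ n ≤ N ∧
            ∃ p q : ℕ, p.Prime ∧ q.Prime ∧ b ^ q < p ∧ n = p * q}

lemma Aset_finite (b N : ℕ) : (Aset b N).Finite :=
  (Set.finite_Iic N).subset fun _ h => h.2.1

lemma card_upper (b N : ℕ) (hb : 2 ≤ b) :
    Nat.card (Aset b N) ≤ ∑ q ∈ (Finset.range (Nat.log 2 N + 1)).filter Nat.Prime,
      Nat.primeCounting (N / q) := by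
  have hsub : Aset b N ⊆ (((Finset.range (Nat.log 2 N + 1)).filter Nat.Prime).biUnion
      (fun q => ((Finset.range (N / q + 1)).filter Nat.Prime).image (fun p => p * q)) : Finset ℕ) := by
    rintro n ⟨h1, h2, p, q, hp, hq, hlt, rfl⟩
    simp only [Finset.coe_biUnion, Set.mem_iUnion, Finset.mem_coe, Finset.mem_image,
      Finset.mem_filter, Finset.mem_range, exists_prop]
    refine ⟨q, ⟨?_, hq⟩, p, ⟨?_, hp⟩, rfl⟩
    · refine Nat.lt_succ_of_le (Nat.le_log_of_pow_le (by norm_num) ?_)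
      calc 2 ^ q ≤ b ^ q := Nat.pow_le_pow_left hb q
        _ ≤ p := hlt.le
        _ ≤ p * q := Nat.le_mul_of_pos_right p hq.pos
        _ ≤ N := h2
    · exact Nat.lt_succ_of_le ((Nat.le_div_iff_mul_le hq.pos).2 h2)
  calc Nat.card (Aset b N) ≤ Nat.card (((Finset.range (Nat.log 2 N + 1)).filter Nat.Prime).biUnion
      (fun q => ((Finset.range (N / q + 1)).filter Nat.Prime).image (fun p => p * q)) : Finset ℕ) :=
        Nat.card_mono (Finset.finite_toSet _) hsub
    _ = _ := Nat.card_eq_card_toFinset _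
    _ ≤ _ := by
      simp only [Finset.toFinset_coe]
      refine Finset.card_biUnion_le.trans (Finset.sum_le_sum fun q _ => ?_)
      rw [← pc_card]
      exact Finset.card_image_le

lemma card_lower (b N y : ℕ) (hb : 2 ≤ b) :
    ∑ q ∈ (Finset.range (y + 1)).filter Nat.Prime,
      ((Nat.primeCounting (N / q) : ℝ) - (b:ℝ)^q) ≤ Nat.card (Aset b N) := by
  have hsub : ((((Finset.range (y + 1)).filter Nat.Prime).biUnion
      (fun q => ((Finset.range (N / q + 1)).filter (fun p => p.Prime ∧ b^q < p)).image (fun p => p * q)) : Finset ℕ) : Set ℕ) ⊆ Aset b N := by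
    intro n hn
    simp only [Finset.coe_biUnion, Set.mem_iUnion, Finset.mem_coe, Finset.mem_image,
      Finset.mem_filter, Finset.mem_range, exists_prop] at hn
    obtain ⟨q, ⟨-, hq⟩, p, ⟨h3, hp, hlt⟩, rfl⟩ := hn
    refine ⟨Nat.mul_pos hp.pos hq.pos, ?_, p, q, hp, hq, hlt, rfl⟩
    exact (Nat.le_div_iff_mul_le hq.pos).1 (Nat.le_of_lt_succ h3)
  have h1 := Nat.card_mono (Aset_finite b N) hsub
  rw [Nat.card_eq_card_toFinset, Finset.toFinset_coe, Finset.card_biUnion] at h1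
  · refine le_trans ?_ (Nat.cast_le.2 h1)
    push_cast
    refine Finset.sum_le_sum fun q hq => ?_
    have hq' := (Finset.mem_filter.1 hq).2
    rw [Finset.card_image_of_injective _ (fun a c h => Nat.eq_of_mul_eq_mul_right hq'.pos h),
      ← pc_card (N/q)]
    have : (Finset.range (N / q + 1)).filter Nat.Prime ⊆
        ((Finset.range (N / q + 1)).filter (fun p => p.Prime ∧ b^q < p)) ∪
          (Finset.range (b^q+1)).filter Nat.Prime := by
      intro p hp
      simp only [Finset.mem_union, Finset.mem_filter, Finset.mem_range] at hp ⊢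
      by_cases h : b^q < p
      · exact Or.inl ⟨hp.1, hp.2, h⟩
      · exact Or.inr ⟨by omega, hp.2⟩
    have h2 := (Finset.card_le_card this).trans (Finset.card_union_le _ _)
    rw [pc_card (b^q)] at h2
    have h3 := h2.trans (Nat.add_le_add_left (pc_le (b^q)) _)
    have h4 : ((((Finset.range (N / q + 1)).filter Nat.Prime).card : ℕ) : ℝ) ≤
      (((Finset.range (N / q + 1)).filter (fun p => p.Prime ∧ b^q < p)).card : ℕ) + (b:ℝ)^q := by
      exact_mod_cast h3
    linarith
  · intro q hq q' hq' hne
    rw [Function.onFun, Finset.disjoint_left]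
    intro n hn hn'
    simp only [Finset.mem_image, Finset.mem_filter, Finset.mem_range] at hn hn'
    simp only [Finset.coe_filter, Set.mem_ofPred_eq] at hq hq'
    obtain ⟨p, ⟨-, hp, hlt⟩, rfl⟩ := hn
    obtain ⟨p', ⟨-, hp', hlt'⟩, he⟩ := hn'
    have a1 : q < p := (Nat.lt_pow_self (by omega)).trans hlt
    have a2 : q' < p' := (Nat.lt_pow_self (by omega)).trans hlt'
    have d1 : q ∣ p' * q' := he ▸ Dvd.intro_left p rfl
    rcases (hq.2.dvd_mul).1 d1 with h | h
    · have e := (Nat.prime_dvd_prime_iff_eq hq.2 hp').1 h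
      subst e
      have : q' = p := by
        apply Nat.eq_of_mul_eq_mul_left hq.2.pos; linarith
      omega
    · exact hne ((Nat.prime_dvd_prime_iff_eq hq.2 hq'.2).1 h)

lemma log_facts (ε M : ℝ) (hε : 0 < ε) : ∃ N₀ : ℕ, ∀ N : ℕ, N₀ ≤ N →
    2 ≤ N ∧ M ≤ Real.log N ∧ 0 < Real.log (Real.log N) ∧ M ≤ Real.log (Real.log (Real.log N)) ∧
      Real.log N * Real.log N ≤ ε * √(N:ℝ) := by
  have hN : Filter.Tendsto (fun N : ℕ => (N:ℝ)) Filter.atTop Filter.atTop := tendsto_natCast_atTop_atTop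
  have h1 := Real.tendsto_log_atTop.comp hN
  have h2 := Real.tendsto_log_atTop.comp h1
  have h3 := Real.tendsto_log_atTop.comp h2
  have h4 := hN.eventually ((Real.isLittleO_pow_log_id_atTop (n := 4)).bound (show 0 < ε^2 by positivity))
  rw [← Filter.eventually_atTop]
  filter_upwards [Filter.eventually_ge_atTop 2, h1.eventually_ge_atTop M, h1.eventually_ge_atTop 0, h2.eventually_gt_atTop 0,
    h3.eventually_ge_atTop M, h4] with N a1 a2 a20 a3 a4 a5
  refine ⟨a1, a2, a3, a4, ?_⟩
  simp only [Function.comp, id, Real.norm_eq_abs] at a5 a20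
  rw [abs_of_nonneg (by positivity), abs_of_nonneg (by positivity)] at a5
  refine (sq_le_sq₀ (by positivity) (by positivity)).1 ?_
  rw [mul_pow ε, Real.sq_sqrt (by positivity)]
  linarith [a5, show (Real.log N * Real.log N)^2 = Real.log N ^ 4 by ring]

lemma main_upper (b : ℕ) (hb : 2 ≤ b) : ∃ c₂ : ℝ, 0 < c₂ ∧ ∃ N₀ : ℕ, ∀ N : ℕ, N₀ ≤ N →
    (Nat.card (Aset b N) : ℝ) ≤ c₂ * N * Real.log (Real.log (Real.log N)) / Real.log N := by
  obtain ⟨C, K, hC, hK, hS⟩ := S_upper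
  obtain ⟨N₀, hN₀⟩ := log_facts 1 4 one_pos
  set D := 2 * (Real.log 4 + 1) with hD
  have hD0 : 0 < D := by
    have : 0 < Real.log 4 := Real.log_pos (by norm_num)
    positivity
  refine ⟨2 * D * (2 * C + K), by positivity, N₀, fun N hN => ?_⟩
  obtain ⟨hN2, hL, hLL, hLLL, hsq⟩ := hN₀ N hN
  set L := Real.log N with hLdef
  have hNpos : (0:ℝ) < N := by positivity
  have hQ1 : 1 ≤ Nat.log 2 N := Nat.log_pos (by norm_num) hN2
  have hQ : ((Nat.log 2 N : ℕ) : ℝ) ≤ 2 * L := by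
    have h1 : ((2:ℝ)^(Nat.log 2 N)) ≤ N := by exact_mod_cast Nat.pow_log_le_self 2 (by omega)
    have h2 := Real.log_le_log (by positivity) h1
    rw [Real.log_pow] at h2
    have := Real.log_two_gt_d9
    nlinarith [(Nat.cast_nonneg (Nat.log 2 N) : (0:ℝ) ≤ _)]
  have hL0 : 0 < L := by linarith
  have hterm : ∀ q ∈ (Finset.range (Nat.log 2 N + 1)).filter Nat.Prime,
      (Nat.primeCounting (N / q) : ℝ) ≤ (2 * D * N / L) * (1 / q) := by
    intro q hq
    rw [Finset.mem_filter, Finset.mem_range] at hq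
    have hq0 : (0:ℝ) < q := by exact_mod_cast hq.2.pos
    have hqQ : (q:ℝ) ≤ Nat.log 2 N := by exact_mod_cast Nat.le_of_lt_succ hq.1
    have hqs : (q:ℝ) ≤ √(N:ℝ) := by nlinarith
    have hs0 : 0 < √(N:ℝ) := by positivity
    have hx : √(N:ℝ) ≤ (N:ℝ) / q := by
      rw [le_div_iff₀ hq0]
      nlinarith [Real.mul_self_sqrt hNpos.le]
    have hlog : L / 2 ≤ Real.log ((N:ℝ)/q) := by
      rw [hLdef, ← Real.log_sqrt hNpos.le]
      exact Real.log_le_log hs0 hx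
    have hx1 : 1 < (N:ℝ)/q := by nlinarith
    have h := pi_upper hx1
    rw [Nat.floor_div_natCast, Nat.floor_natCast] at h
    calc _ ≤ _ := h
      _ ≤ D * ((N:ℝ)/q) / (L/2) := by gcongr
      _ = _ := by field_simp
  have hcard : (Nat.card (Aset b N) : ℝ) ≤ (2 * D * N / L) * Srec (Nat.log 2 N) := by
    have := card_upper b N hb
    calc (Nat.card (Aset b N) : ℝ) ≤ ∑ q ∈ (Finset.range (Nat.log 2 N + 1)).filter Nat.Prime,
          (Nat.primeCounting (N / q) : ℝ) := by exact_mod_cast this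
      _ ≤ _ := Finset.sum_le_sum hterm
      _ = _ := by rw [← Finset.mul_sum]; rfl
  have hlog1 : Real.log ((Nat.log 2 N : ℕ) + 1 : ℝ) ≤ 2 * Real.log L := by
    have : Real.log ((Nat.log 2 N : ℕ) + 1 : ℝ) ≤ Real.log (L^2) := by
      apply Real.log_le_log (by positivity); nlinarith
    rw [Real.log_pow] at this; exact_mod_cast this
  have hlog2 : Real.log (Real.log ((Nat.log 2 N : ℕ) + 1 : ℝ)) ≤ 2 * Real.log (Real.log L) := by
    have h0 : 0 < Real.log ((Nat.log 2 N : ℕ) + 1 : ℝ) := Real.log_pos (by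
      have : (1:ℝ) ≤ (Nat.log 2 N : ℕ) := by exact_mod_cast hQ1
      linarith)
    have h1 := Real.log_le_log h0 hlog1
    rw [Real.log_mul (by norm_num) hLL.ne'] at h1
    linarith [Real.log_two_lt_d9]
  have hSS : Srec (Nat.log 2 N) ≤ (2 * C + K) * Real.log (Real.log L) := by
    have := hS _ hQ1
    nlinarith
  calc _ ≤ _ := hcard
    _ ≤ (2 * D * N / L) * ((2 * C + K) * Real.log (Real.log L)) := by gcongr
    _ = _ := by field_simp

set_option maxHeartbeats 1000000 in
lemma main_lower (b : ℕ) (hb : 2 ≤ b) : ∃ c₁ : ℝ, 0 < c₁ ∧ ∃ N₀ : ℕ, ∀ N : ℕ, N₀ ≤ N →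
    c₁ * N * Real.log (Real.log (Real.log N)) / Real.log N ≤ (Nat.card (Aset b N) : ℝ) := by
  obtain ⟨c, hc, hS⟩ := S_lower
  obtain ⟨d, hd, hpi⟩ := pi_lower
  set B := 2 * Real.log b with hB
  have hB1 : 1 ≤ B := by
    have : Real.log 2 ≤ Real.log b := Real.log_le_log (by norm_num) (by exact_mod_cast hb)
    linarith [Real.log_two_gt_d9]
  obtain ⟨N₀, hN₀⟩ := log_facts (min (d/4) (1/2)) (4 + B^2) (by positivity)
  refine ⟨d / 4 * (c / 2), by positivity, N₀, fun N hN => ?_⟩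
  obtain ⟨hN2, hL, hLL, hLLL, hsq⟩ := hN₀ N hN
  set L := Real.log N with hLdef
  have hNpos : (0:ℝ) < N := by positivity
  have hs0 : 0 < √(N:ℝ) := by positivity
  have hss := Real.mul_self_sqrt hNpos.le
  have hsq1 : L * L ≤ d/4 * √(N:ℝ) := hsq.trans (by gcongr; exact min_le_left _ _)
  have hsq2 : L * L ≤ 1/2 * √(N:ℝ) := hsq.trans (by gcongr; exact min_le_right _ _)
  have hL0 : 0 < L := by nlinarith
  set y := ⌊L / B⌋₊ with hy
  have hyle : (y:ℝ) ≤ L / B := Nat.floor_le (by positivity)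
  have hyL : (y:ℝ) ≤ L := hyle.trans (div_le_self hL0.le hB1)
  have hygt : L / B < (y:ℝ) + 1 := Nat.lt_floor_add_one _
  have hy1 : 1 ≤ y := by
    rw [hy, Nat.one_le_floor_iff, le_div_iff₀ (by linarith)]
    nlinarith
  have hterm : ∀ q ∈ (Finset.range (y + 1)).filter Nat.Prime,
      (d / 4 * N / L) * (1 / q) ≤ (Nat.primeCounting (N / q) : ℝ) - (b:ℝ)^q := by
    intro q hq
    rw [Finset.mem_filter, Finset.mem_range] at hq
    have hq0 : (0:ℝ) < q := by exact_mod_cast hq.2.pos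
    have hqy : (q:ℝ) ≤ y := by exact_mod_cast Nat.le_of_lt_succ hq.1
    have hqL : (q:ℝ) ≤ L := hqy.trans hyL
    have hbq : (b:ℝ)^q ≤ √(N:ℝ) := by
      have hb0 : (0:ℝ) < b := by positivity
      rw [← Real.log_le_log_iff (by positivity) hs0, Real.log_pow, Real.log_sqrt hNpos.le]
      have : (q:ℝ) * B ≤ L := by
        rw [← le_div_iff₀ (by linarith)]; exact hqy.trans hyle
      rw [hB] at this
      linarith
    have hLs : L ≤ √(N:ℝ) := by nlinarith
    have h2q : 2 * q ≤ N := by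
      have : (2:ℝ) * q ≤ N := by nlinarith
      exact_mod_cast this
    have hM2 : 2 ≤ N / q := (Nat.le_div_iff_mul_le hq.2.pos).2 h2q
    have hMlow : (N:ℝ) / (2*q) ≤ ((N / q : ℕ) : ℝ) := by
      rw [div_le_iff₀ (by positivity)]
      have h1 : N < q * (N/q + 1) := by
        have := Nat.lt_mul_div_succ N hq.2.pos
        exact this
      have h2 : N ≤ (N/q) * (2*q) := by nlinarith
      exact_mod_cast h2
    have hM0 : (2:ℝ) ≤ ((N / q : ℕ) : ℝ) := by exact_mod_cast hM2
    have hMlog : Real.log ((N / q : ℕ) : ℝ) ≤ L :=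
      Real.log_le_log (by linarith) (by exact_mod_cast Nat.div_le_self N q)
    have hMlog0 : 0 < Real.log ((N / q : ℕ) : ℝ) := Real.log_pos (by linarith)
    have h3 : d * ((N:ℝ) / (2*q)) / L ≤ Nat.primeCounting (N/q) := by
      refine le_trans ?_ (hpi _ hM2)
      gcongr
    have h4 : √(N:ℝ) ≤ (d / 4 * N / L) * (1 / q) := by
      rw [mul_one_div, div_div, le_div_iff₀ (by positivity)]
      have : L * q ≤ d/4 * √(N:ℝ) := by nlinarith
      nlinarith
    have h5 : d * ((N:ℝ) / (2*q)) / L = 2 * ((d / 4 * N / L) * (1 / q)) := by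
      field_simp; norm_num
    linarith
  have hcard : (d / 4 * N / L) * Srec y ≤ (Nat.card (Aset b N) : ℝ) := by
    refine le_trans ?_ (card_lower b N y hb)
    refine le_trans (le_of_eq ?_) (Finset.sum_le_sum hterm)
    rw [← Finset.mul_sum]; rfl
  have hyr : √L ≤ (y:ℝ) + 1 := by
    refine le_trans ?_ hygt.le
    rw [le_div_iff₀ (by linarith)]
    have : B ≤ √L := Real.le_sqrt_of_sq_le (by linarith)
    nlinarith [Real.mul_self_sqrt hL0.le, Real.sqrt_nonneg L]
  have hlog1 : Real.log L / 2 ≤ Real.log ((y:ℝ)+1) := by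
    rw [← Real.log_sqrt hL0.le]
    exact Real.log_le_log (by positivity) hyr
  have hlog2 : Real.log (Real.log L) / 2 ≤ Real.log (Real.log ((y:ℝ)+1)) := by
    have h1 := Real.log_le_log (by positivity) hlog1
    rw [Real.log_div hLL.ne' (by norm_num)] at h1
    linarith [Real.log_two_lt_d9, sq_nonneg B]
  have hSS : c / 2 * Real.log (Real.log L) ≤ Srec y := by
    have := hS y hy1
    have h2 := mul_le_mul_of_nonneg_left hlog2 hc.le
    linarith
  calc _ = (d / 4 * N / L) * (c / 2 * Real.log (Real.log L)) := by field_simp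
    _ ≤ (d / 4 * N / L) * Srec y := by gcongr
    _ ≤ _ := hcard

theorem stmt_16 (b : ℕ) (hb : 2 ≤ b) :
    ∃ c₁ c₂ : ℝ, 0 < c₁ ∧ 0 < c₂ ∧ ∃ N₀ : ℕ, ∀ N : ℕ, N₀ ≤ N →
      c₁ * N * Real.log (Real.log (Real.log N)) / Real.log N ≤
          (Nat.card {n : ℕ | 1 ≤ n ∧ n ≤ N ∧
            ∃ p q : ℕ, p.Prime ∧ q.Prime ∧ b ^ q < p ∧ n = p * q} : ℝ) ∧
        (Nat.card {n : ℕ | 1 ≤ n ∧ n ≤ N ∧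
            ∃ p q : ℕ, p.Prime ∧ q.Prime ∧ b ^ q < p ∧ n = p * q} : ℝ) ≤
          c₂ * N * Real.log (Real.log (Real.log N)) / Real.log N := by
  obtain ⟨c₁, h₁, N₁, H₁⟩ := main_lower b hb
  obtain ⟨c₂, h₂, N₂, H₂⟩ := main_upper b hb
  exact ⟨c₁, c₂, h₁, h₂, max N₁ N₂, fun N hN =>
    ⟨H₁ N (le_of_max_le_left hN), H₂ N (le_of_max_le_right hN)⟩⟩
end
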